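/- If f : ℝ → (-∞,+∞] is a proper function belonging to the class F, then its Fenchel conjugate f* also belongs to the class F. -/

import Mathlib

/-!
The convex conjugate of a piecewise affine or strictly convex differentiable function is of the
same kind, because the pieces of `f*` are the sets of slopes of `f` over its pieces.

Lower semicontinuity and convexity of `f*` are immediate from its being a supremum of affine
functions, and a closed convex function of one variable is continuous on its domain
(`continuousOn_effDom`). For the pieces, write `∂f(U)` for the set of subgradients of `f` at points
of `U` (`subdiffImage`). If `U` is an interval, so is `∂f(U)` (`subdiffImage_ordConnected`): a slope
between subgradients at `x₁` and `x₂` is a subgradient at a minimizer over `[x₁, x₂]`. Apply this to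
each breakpoint and to each open piece of `f`. The resulting intervals and the domain of `f*` have
finitely many endpoints in all; these are the breakpoints of `f*`. An open interval `V` containing
no such endpoint lies inside or outside each of these sets. If `V` is in the domain of `f*`, the
supremum is attained at interior slopes (`exists_mem_subdiff_of_between`), so `V` lies in one of
the sets `∂f(U)`:

* if `U = {a}`, then `f*(y) = a y - f(a)` on `V`, which is affine;
* if `f` is affine on `U`, then `∂f(U)` has at most one point, which is impossible;
* if `f` is strictly convex and differentiable on `U`, then so is `f*` on `V`
  (`fenchel_strictConvexDiffOn`).
-/

noncomputable section


/-- Finite sets of breakpoints `-∞ = b₀ < b₁ < ⋯ < b_m = +∞`. -/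
structure Breakpoints where
  m : ℕ
  hm : 0 < m
  pts : ℕ → EReal
  bot : pts 0 = ⊥
  top : pts m = ⊤
  mono : ∀ i j : ℕ, i < j → j ≤ m → pts i < pts j

/-- The `i`-th open interval `(bᵢ, bᵢ₊₁)` determined by the breakpoints. -/
def Breakpoints.itv (B : Breakpoints) (i : ℕ) : Set ℝ :=
  {x : ℝ | B.pts i < (x : EReal) ∧ (x : EReal) < B.pts (i + 1)}

/-- Convexity for extended-real-valued functions on `ℝ`. -/
def ERealConvex (f : ℝ → EReal) : Prop :=
  ∀ x y a b : ℝ, 0 ≤ a → 0 ≤ b → a + b = 1 →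
    f (a * x + b * y) ≤ (a : EReal) * f x + (b : EReal) * f y

/-- The effective domain of an extended-real-valued function nowhere equal to `-∞`. -/
def effDom (f : ℝ → EReal) : Set ℝ := {x : ℝ | f x ≠ ⊤}

/-- `f` is (finite and) affine on `s`. -/
def IsAffineOn (f : ℝ → EReal) (s : Set ℝ) : Prop :=
  ∃ c d : ℝ, ∀ x ∈ s, f x = ((c * x + d : ℝ) : EReal)

/-- `f` is (finite,) strictly convex and differentiable on `s`. -/
def IsStrictConvexDiffOn (f : ℝ → EReal) (s : Set ℝ) : Prop :=
  ∃ g : ℝ → ℝ, (∀ x ∈ s, f x = (g x : EReal)) ∧ StrictConvexOn ℝ s g ∧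
    ∀ x ∈ s, DifferentiableAt ℝ g x

/-- Membership in the class `F(A)` for the breakpoint set `A = B`. -/
def MemFA (B : Breakpoints) (f : ℝ → EReal) : Prop :=
  (∀ x, f x ≠ ⊥) ∧ LowerSemicontinuous f ∧ ERealConvex f ∧
  ContinuousOn f (effDom f) ∧
  ∀ i : ℕ, i < B.m →
    IsAffineOn f (B.itv i) ∨ IsStrictConvexDiffOn f (B.itv i) ∨
      ∀ x ∈ B.itv i, f x = ⊤

/-- Membership in the class `F`. -/
def MemF (f : ℝ → EReal) : Prop := ∃ B : Breakpoints, MemFA B f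

/-- The convex subdifferential of `f : ℝ → (-∞,+∞]` (empty outside the effective domain). -/
def subdiff (f : ℝ → EReal) (x : ℝ) : Set ℝ :=
  {φ : ℝ | f x ≠ ⊤ ∧ ∀ y : ℝ, ((φ * (y - x) : ℝ) : EReal) + f x ≤ f y}

/-- The Fenchel conjugate of `f : ℝ → (-∞,+∞]`. -/
def fenchel (f : ℝ → EReal) : ℝ → EReal :=
  fun y => ⨆ x : ℝ, (((x * y : ℝ)) : EReal) - f x

/-! ### Elementary facts about the conjugate -/

open Set Filter Topology

section Conjugate

variable {f : ℝ → EReal}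

lemma coe_toReal_of_ne_top (hbot : ∀ x, f x ≠ ⊥) {x : ℝ} (hx : f x ≠ ⊤) :
    (((f x).toReal : ℝ) : EReal) = f x := EReal.coe_toReal hx (hbot x)

lemma le_fenchel {x r : ℝ} (hx : f x = (r : EReal)) (y : ℝ) :
    ((x * y - r : ℝ) : EReal) ≤ fenchel f y := by
  have := le_iSup (fun x : ℝ => (((x * y : ℝ)) : EReal) - f x) x
  simp only [hx] at this
  exact_mod_cast this

/-- A real `c` bounds `f*(y)` from above iff the line `x ↦ x y - c` is a minorant of `f`. -/
lemma fenchel_le_iff (hbot : ∀ x, f x ≠ ⊥) {y c : ℝ} :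
    fenchel f y ≤ (c : EReal) ↔ ∀ x, ((x * y - c : ℝ) : EReal) ≤ f x := by
  unfold fenchel
  rw [iSup_le_iff]
  refine forall_congr' fun x => ?_
  induction h : f x with
  | bot => exact absurd h (hbot x)
  | top => simp
  | coe r =>
    norm_cast
    constructor <;> intro h <;> linarith

lemma mem_subdiff_iff {x r y : ℝ} (hx : f x = (r : EReal)) :
    y ∈ subdiff f x ↔ ∀ z, ((y * (z - x) + r : ℝ) : EReal) ≤ f z := by
  simp [subdiff, hx]

/-- The equality case of the Fenchel–Young inequality. -/
lemma mem_subdiff_iff_fenchel (hbot : ∀ x, f x ≠ ⊥) {x r y : ℝ} (hx : f x = (r : EReal)) :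
    y ∈ subdiff f x ↔ fenchel f y = ((x * y - r : ℝ) : EReal) := by
  rw [mem_subdiff_iff hx, le_antisymm_iff, and_iff_left (le_fenchel hx y), fenchel_le_iff hbot]
  refine forall_congr' fun z => ?_
  rw [show y * (z - x) + r = z * y - (x * y - r) by ring]

lemma fenchel_ne_bot (hbot : ∀ x, f x ≠ ⊥) (hproper : ∃ x : ℝ, f x ≠ ⊤) (y : ℝ) :
    fenchel f y ≠ ⊥ := by
  obtain ⟨x, hx⟩ := hproper
  have h := le_fenchel (coe_toReal_of_ne_top hbot hx).symm y
  intro h0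
  rw [h0] at h
  exact EReal.coe_ne_bot _ (le_bot_iff.1 h)

lemma fenchel_lsc (hbot : ∀ x, f x ≠ ⊥) : LowerSemicontinuous (fenchel f) := by
  apply lowerSemicontinuous_iSup
  intro x
  apply Continuous.lowerSemicontinuous
  induction h : f x with
  | bot => exact absurd h (hbot x)
  | top => simpa using continuous_const
  | coe r =>
    have : Continuous fun y : ℝ => x * y - r := by fun_prop
    exact_mod_cast continuous_coe_real_ereal.comp this

lemma fenchel_convex (hbot : ∀ x, f x ≠ ⊥) : ERealConvex (fenchel f) := by
  intro y₁ y₂ a b ha hb hab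
  refine iSup_le fun x => ?_
  induction h : f x with
  | bot => exact absurd h (hbot x)
  | top => simp
  | coe r =>
    have h1 := mul_le_mul_of_nonneg_left (le_fenchel h y₁) (EReal.coe_nonneg.2 ha)
    have h2 := mul_le_mul_of_nonneg_left (le_fenchel h y₂) (EReal.coe_nonneg.2 hb)
    refine le_trans (le_of_eq ?_) (add_le_add h1 h2)
    norm_cast
    linear_combination r * hab

end Conjugate

/-! ### Continuity of one-dimensional closed convex functions on their domain -/

section Continuity

variable {g : ℝ → EReal}

/-- On a segment with endpoints in the domain, a convex function lies below its chord, which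
tends to the value at the endpoint; hence upper semicontinuity along the segment. -/
lemma eventually_lt_of_segment (hbot : ∀ x, g x ≠ ⊥) (hc : ERealConvex g) {y z : ℝ}
    (hy : g y ≠ ⊤) (hz : g z ≠ ⊤) (hyz : y ≠ z) {c : EReal} (hcy : g y < c) :
    ∀ᶠ w in 𝓝 y, w ∈ uIcc y z → g w < c := by
  obtain ⟨r, hr⟩ : ∃ r : ℝ, g y = r := ⟨_, (coe_toReal_of_ne_top hbot hy).symm⟩
  obtain ⟨s, hs⟩ : ∃ s : ℝ, g z = s := ⟨_, (coe_toReal_of_ne_top hbot hz).symm⟩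
  have hzy : z - y ≠ 0 := sub_ne_zero.2 hyz.symm
  let L : ℝ → ℝ := fun w => (1 - (w - y) / (z - y)) * r + (w - y) / (z - y) * s
  have hL : Continuous L := by fun_prop
  have hLy : ((L y : ℝ) : EReal) < c := by simpa [L, ← hr] using hcy
  have hev := (continuous_coe_real_ereal.comp hL).continuousAt.eventually_lt_const hLy
  filter_upwards [hev] with w hw hmem
  refine lt_of_le_of_lt ?_ hw
  have h01 : 0 ≤ (w - y) / (z - y) ∧ (w - y) / (z - y) ≤ 1 := by
    rcases lt_or_gt_of_ne hyz with h | h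
    · rw [uIcc_of_le h.le] at hmem
      exact ⟨div_nonneg (by linarith [hmem.1]) (by linarith),
        (div_le_one (by linarith)).2 (by linarith [hmem.2])⟩
    · rw [uIcc_of_ge h.le] at hmem
      exact ⟨div_nonneg_of_nonpos (by linarith [hmem.2]) (by linarith),
        (div_le_one_of_neg (by linarith)).2 (by linarith [hmem.1])⟩
  have key := hc y z (1 - (w - y) / (z - y)) ((w - y) / (z - y)) (by linarith [h01.2]) h01.1
    (by ring)
  have hw' : (1 - (w - y) / (z - y)) * y + (w - y) / (z - y) * z = w := by
    field_simp
    ring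
  rw [hw', hr, hs] at key
  exact_mod_cast key

lemma continuousOn_effDom (hbot : ∀ x, g x ≠ ⊥) (hc : ERealConvex g)
    (hlsc : LowerSemicontinuous g) : ContinuousOn g (effDom g) := by
  intro y hy
  refine tendsto_order.2 ⟨fun c hcy => nhdsWithin_le_nhds (hlsc y c hcy), fun c hcy => ?_⟩
  have hright : ∀ᶠ w in 𝓝 y, w ∈ effDom g → y < w → g w < c := by
    by_cases h : ∃ z ∈ effDom g, y < z
    · obtain ⟨z, hz, hyz⟩ := h
      filter_upwards [eventually_lt_of_segment hbot hc hy hz hyz.ne hcy, Iio_mem_nhds hyz]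
        with w hw hwz _ hyw
      exact hw (by rw [uIcc_of_le hyz.le]; exact ⟨hyw.le, le_of_lt hwz⟩)
    · push Not at h
      exact Eventually.of_forall fun w hw hyw => absurd hyw (not_lt.2 (h w hw))
  have hleft : ∀ᶠ w in 𝓝 y, w ∈ effDom g → w < y → g w < c := by
    by_cases h : ∃ z ∈ effDom g, z < y
    · obtain ⟨z, hz, hyz⟩ := h
      filter_upwards [eventually_lt_of_segment hbot hc hy hz hyz.ne' hcy, Ioi_mem_nhds hyz]
        with w hw hwz _ hyw
      exact hw (by rw [uIcc_of_ge hyz.le]; exact ⟨le_of_lt hwz, hyw.le⟩)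
    · push Not at h
      exact Eventually.of_forall fun w hw hyw => absurd hyw (not_lt.2 (h w hw))
  rw [eventually_nhdsWithin_iff]
  filter_upwards [hright, hleft] with w h1 h2 hw
  rcases lt_trichotomy y w with h | rfl | h
  · exact h1 hw h
  · exact hcy
  · exact h2 hw h

lemma effDom_ordConnected (hbot : ∀ x, g x ≠ ⊥) (hc : ERealConvex g) :
    (effDom g).OrdConnected := by
  rw [← convex_iff_ordConnected (𝕜 := ℝ)]
  intro y hy z hz a b ha hb hab
  have key := hc y z a b ha hb hab
  rw [← coe_toReal_of_ne_top hbot hy, ← coe_toReal_of_ne_top hbot hz] at key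
  exact ne_top_of_le_ne_top (by exact_mod_cast EReal.coe_ne_top _) key

end Continuity

/-! ### Existence of points with a given subgradient -/

section Attainment

variable {f : ℝ → EReal}

/-- The subgradients of `f` at points of `U`. -/
def subdiffImage (f : ℝ → EReal) (U : Set ℝ) : Set ℝ := {y | ∃ x ∈ U, y ∈ subdiff f x}

/-- If `z ↦ f z - y z` is outside `[l, u]` at least as large as at some point of `[l, u]`, then
it attains its minimum on `[l, u]`, by lower semicontinuity and compactness. -/
lemma exists_mem_subdiff (hbot : ∀ x, f x ≠ ⊥) (hlsc : LowerSemicontinuous f)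
    {l u x₀ r y : ℝ} (hx₀ : x₀ ∈ Icc l u) (hr : f x₀ = (r : EReal))
    (hout : ∀ z, z ∉ Icc l u → ((y * (z - x₀) + r : ℝ) : EReal) ≤ f z) :
    ∃ x ∈ Icc l u, y ∈ subdiff f x := by
  have hl : LowerSemicontinuous fun z : ℝ => f z + ((-(y * z) : ℝ) : EReal) := by
    refine LowerSemicontinuous.add' hlsc (Continuous.lowerSemicontinuous ?_) fun z =>
      EReal.continuousAt_add (Or.inr (EReal.coe_ne_bot _)) (Or.inl (hbot z))
    exact continuous_coe_real_ereal.comp (by fun_prop)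
  obtain ⟨x, hx, hmin⟩ := (hl.lowerSemicontinuousOn (Icc l u)).exists_isMinOn ⟨x₀, hx₀⟩
    isCompact_Icc
  rw [isMinOn_iff] at hmin
  have h0 := hmin x₀ hx₀
  have hxtop : f x ≠ ⊤ := by
    intro h
    rw [h, hr, EReal.top_add_coe, top_le_iff] at h0
    exact EReal.coe_ne_top (r + -(y * x₀)) (by exact_mod_cast h0)
  have hs := (coe_toReal_of_ne_top hbot hxtop).symm
  generalize (f x).toReal = s at hs
  refine ⟨x, hx, (mem_subdiff_iff hs).2 fun z => ?_⟩
  rw [hr, hs] at h0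
  have h0' : s + -(y * x) ≤ r + -(y * x₀) := by exact_mod_cast h0
  by_cases hz : z ∈ Icc l u
  · have h1 := hmin z hz
    induction hfz : f z with
    | bot => exact absurd hfz (hbot z)
    | top => exact le_top
    | coe t =>
      rw [hfz, hs] at h1
      have h1' : s + -(y * x) ≤ t + -(y * z) := by exact_mod_cast h1
      exact_mod_cast (by linarith : y * (z - x) + s ≤ t)
  · refine le_trans ?_ (hout z hz)
    exact_mod_cast (by linarith : y * (z - x) + s ≤ y * (z - x₀) + r)

/-- The subgradients at the points of an interval form an interval. -/
lemma subdiffImage_ordConnected (hbot : ∀ x, f x ≠ ⊥) (hlsc : LowerSemicontinuous f)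
    {U : Set ℝ} (hU : U.OrdConnected) : (subdiffImage f U).OrdConnected := by
  refine ⟨?_⟩
  rintro y₁ ⟨x₁, hx₁, h₁⟩ y₂ ⟨x₂, hx₂, h₂⟩ y ⟨hy₁, hy₂⟩
  rcases eq_or_lt_of_le hy₁ with rfl | hlt
  · exact ⟨x₁, hx₁, h₁⟩
  have hr₁ := (coe_toReal_of_ne_top hbot h₁.1).symm
  have hr₂ := (coe_toReal_of_ne_top hbot h₂.1).symm
  generalize (f x₁).toReal = r₁ at hr₁
  generalize (f x₂).toReal = r₂ at hr₂
  rw [mem_subdiff_iff hr₁] at h₁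
  rw [mem_subdiff_iff hr₂] at h₂
  have hchord : y₁ * (x₂ - x₁) + r₁ ≤ r₂ := by
    have a := h₁ x₂
    rw [hr₂] at a
    exact_mod_cast a
  have hchord' : y₂ * (x₁ - x₂) + r₂ ≤ r₁ := by
    have a := h₂ x₁
    rw [hr₁] at a
    exact_mod_cast a
  -- monotonicity of the subdifferential
  have hx : x₁ ≤ x₂ := by
    by_contra! hcon
    nlinarith
  -- the comparison point is the better of the two endpoints
  have main : ∃ x ∈ Icc x₁ x₂, y ∈ subdiff f x := by
    rcases le_total (r₁ - y * x₁) (r₂ - y * x₂) with hle | hle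
    · refine exists_mem_subdiff hbot hlsc (left_mem_Icc.2 hx) hr₁ fun z hz => ?_
      rcases lt_or_ge z x₁ with hz1 | hz1
      · refine le_trans ?_ (h₁ z)
        exact_mod_cast (by nlinarith : y * (z - x₁) + r₁ ≤ y₁ * (z - x₁) + r₁)
      · have hz2 : x₂ < z := by
          by_contra! h
          exact hz ⟨hz1, h⟩
        refine le_trans ?_ (h₂ z)
        exact_mod_cast (by nlinarith : y * (z - x₁) + r₁ ≤ y₂ * (z - x₂) + r₂)
    · refine exists_mem_subdiff hbot hlsc (right_mem_Icc.2 hx) hr₂ fun z hz => ?_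
      rcases lt_or_ge z x₁ with hz1 | hz1
      · refine le_trans ?_ (h₁ z)
        exact_mod_cast (by nlinarith : y * (z - x₂) + r₂ ≤ y₁ * (z - x₁) + r₁)
      · have hz2 : x₂ < z := by
          by_contra! h
          exact hz ⟨hz1, h⟩
        refine le_trans ?_ (h₂ z)
        exact_mod_cast (by nlinarith : y * (z - x₂) + r₂ ≤ y₂ * (z - x₂) + r₂)
  obtain ⟨x, hxm, hxy⟩ := main
  exact ⟨x, hU.out hx₁ hx₂ hxm, hxy⟩

/-- Strictly between two points of the domain of `f*`, the supremum defining `f*` is attained: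
the two affine minorants make `z ↦ f z - y z` coercive. -/
lemma exists_mem_subdiff_of_between (hbot : ∀ x, f x ≠ ⊥) (hlsc : LowerSemicontinuous f)
    (hproper : ∃ x : ℝ, f x ≠ ⊤) {y₁ y y₂ : ℝ} (h₁ : fenchel f y₁ ≠ ⊤) (h₂ : fenchel f y₂ ≠ ⊤)
    (hy₁ : y₁ < y) (hy₂ : y < y₂) : ∃ x, y ∈ subdiff f x := by
  obtain ⟨x₀, hx₀⟩ := hproper
  have hb := fenchel_ne_bot hbot ⟨x₀, hx₀⟩
  have hr := (coe_toReal_of_ne_top hbot hx₀).symm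
  have m₁ := (fenchel_le_iff hbot).1 (coe_toReal_of_ne_top hb h₁).ge
  have m₂ := (fenchel_le_iff hbot).1 (coe_toReal_of_ne_top hb h₂).ge
  generalize (f x₀).toReal = r at hr
  generalize (fenchel f y₁).toReal = c₁ at m₁
  generalize (fenchel f y₂).toReal = c₂ at m₂
  -- the thresholds beyond which each affine minorant beats the value at `x₀`
  let l := min x₀ (-((c₁ + r - y * x₀) / (y - y₁)))
  let u := max x₀ ((c₂ + r - y * x₀) / (y₂ - y))
  obtain ⟨x, -, hx⟩ := exists_mem_subdiff (l := l) (u := u) (y := y) hbot hlsc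
    ⟨min_le_left _ _, le_max_left _ _⟩ hr (fun z hz => by
      rcases lt_or_ge z l with hzl | hzl
      · refine le_trans ?_ (m₁ z)
        have h := lt_of_lt_of_le hzl (min_le_right _ _)
        rw [lt_neg, div_lt_iff₀ (by linarith)] at h
        exact_mod_cast (by nlinarith : y * (z - x₀) + r ≤ z * y₁ - c₁)
      · have hzu : u < z := by
          by_contra! h
          exact hz ⟨hzl, h⟩
        refine le_trans ?_ (m₂ z)
        have h := lt_of_le_of_lt (le_max_right _ _) hzu
        rw [div_lt_iff₀ (by linarith)] at h
        exact_mod_cast (by nlinarith : y * (z - x₀) + r ≤ z * y₂ - c₂))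
  exact ⟨x, hx⟩

lemma deriv_eq_of_mem_subdiff {U : Set ℝ} (hU : IsOpen U) {φ : ℝ → ℝ}
    (hφ : ∀ x ∈ U, f x = (φ x : EReal)) {x y : ℝ} (hx : x ∈ U) (hd : DifferentiableAt ℝ φ x)
    (hy : y ∈ subdiff f x) : deriv φ x = y := by
  rw [mem_subdiff_iff (hφ x hx)] at hy
  have hmin : IsLocalMin (fun z => φ z - y * z) x := by
    filter_upwards [hU.mem_nhds hx] with z hz
    have h := hy z
    rw [hφ z hz] at h
    have h' : y * (z - x) + φ x ≤ φ z := by exact_mod_cast h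
    linarith
  have hder : HasDerivAt (fun z => φ z - y * z) (deriv φ x - y * 1) x :=
    hd.hasDerivAt.sub ((hasDerivAt_id x).const_mul y)
  linarith [hmin.hasDerivAt_eq_zero hder]

/-- Strictly convex differentiable pieces of `f` give strictly convex differentiable pieces of
`f*`. Differentiability of `f` makes a point's subgradient unique, whence strict convexity of
`f*`; strict monotonicity of `f'` makes the maximizer depend continuously on the slope, whence
differentiability of `f*`. -/
lemma fenchel_strictConvexDiffOn (hbot : ∀ x, f x ≠ ⊥) {U V : Set ℝ} (hU : IsOpen U)
    (hf : IsStrictConvexDiffOn f U) (hV : IsOpen V) (hVc : V.OrdConnected)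
    (hsub : V ⊆ subdiffImage f U) : IsStrictConvexDiffOn (fenchel f) V := by
  obtain ⟨φ, hφ, hconv, hdiff⟩ := hf
  have hsub' : ∀ y, y ∈ V → ∃ x, x ∈ U ∧ y ∈ subdiff f x := fun y hy => hsub hy
  choose! X hXU hX using hsub'
  have hval : ∀ y ∈ V, fenchel f y = ((X y * y - φ (X y) : ℝ) : EReal) := fun y hy =>
    (mem_subdiff_iff_fenchel hbot (hφ _ (hXU y hy))).1 (hX y hy)
  have hder : ∀ y ∈ V, deriv φ (X y) = y := fun y hy =>
    deriv_eq_of_mem_subdiff hU hφ (hXU y hy) (hdiff _ (hXU y hy)) (hX y hy)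
  have hmono := hconv.strictMonoOn_deriv hdiff
  set G : ℝ → ℝ := fun y => X y * y - φ (X y) with hG
  have hFY : ∀ y ∈ V, ∀ y' ∈ V, X y * y' - φ (X y) ≤ G y' := fun y hy y' hy' => by
    have h := le_fenchel (hφ _ (hXU y hy)) y'
    rw [hval y' hy'] at h
    exact_mod_cast h
  have hFYs : ∀ y ∈ V, ∀ y' ∈ V, y ≠ y' → X y * y' - φ (X y) < G y' :=
    fun y hy y' hy' hne => by
      refine lt_of_le_of_ne (hFY y hy y' hy') fun heq => hne ?_
      have hmem : y' ∈ subdiff f (X y) :=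
        (mem_subdiff_iff_fenchel hbot (hφ _ (hXU y hy))).2 (by rw [hval y' hy', heq])
      rw [← hder y hy]
      exact deriv_eq_of_mem_subdiff hU hφ (hXU y hy) (hdiff _ (hXU y hy)) hmem
  refine ⟨G, hval, ⟨convex_iff_ordConnected.2 hVc, ?_⟩, ?_⟩
  · intro y₁ hy₁ y₂ hy₂ hne a b ha hb hab
    have hy : a • y₁ + b • y₂ ∈ V := convex_iff_ordConnected.2 hVc hy₁ hy₂ ha.le hb.le hab
    simp only [smul_eq_mul] at hy ⊢
    have hb' : b = 1 - a := by linarith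
    have hsub : y₁ - y₂ ≠ 0 := sub_ne_zero.2 hne
    have n₁ : a * y₁ + b * y₂ ≠ y₁ := by
      intro h
      apply mul_ne_zero hb.ne' hsub
      rw [hb'] at h ⊢
      linarith
    have n₂ : a * y₁ + b * y₂ ≠ y₂ := by
      intro h
      apply mul_ne_zero ha.ne' hsub
      rw [hb'] at h
      linarith
    have e₁ := mul_lt_mul_of_pos_left (hFYs _ hy y₁ hy₁ n₁) ha
    have e₂ := mul_lt_mul_of_pos_left (hFYs _ hy y₂ hy₂ n₂) hb
    set x := X (a * y₁ + b * y₂)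
    have e₃ : G (a * y₁ + b * y₂) = a * (x * y₁ - φ x) + b * (x * y₂ - φ x) := by
      simp only [hG]
      linear_combination φ x * hab
    linarith
  · intro y hy
    have hcont : ContinuousAt X y := by
      refine tendsto_order.2 ⟨fun c hc => ?_, fun c hc => ?_⟩
      · -- a point of `U` between `c` and `X y`
        obtain ⟨s, hs, hsU⟩ : ∃ s ∈ Ioo c (X y), s ∈ U := by
          have h1 : ∀ᶠ s in 𝓝[<] (X y), s ∈ U := nhdsWithin_le_nhds (hU.mem_nhds (hXU y hy))
          exact (Filter.Eventually.and (Ioo_mem_nhdsLT hc) h1).exists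
        have hlt : deriv φ s < y := by
          have h := hmono hsU (hXU y hy) hs.2
          rwa [hder y hy] at h
        filter_upwards [hV.mem_nhds hy, Ioi_mem_nhds hlt] with w hw hlw
        rw [mem_Ioi, ← hder w hw, hmono.lt_iff_lt hsU (hXU w hw)] at hlw
        exact hs.1.trans hlw
      · obtain ⟨s, hs, hsU⟩ : ∃ s ∈ Ioo (X y) c, s ∈ U := by
          have h1 : ∀ᶠ s in 𝓝[>] (X y), s ∈ U := nhdsWithin_le_nhds (hU.mem_nhds (hXU y hy))
          exact (Filter.Eventually.and (Ioo_mem_nhdsGT hc) h1).exists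
        have hlt : y < deriv φ s := by
          have h := hmono (hXU y hy) hsU hs.1
          rwa [hder y hy] at h
        filter_upwards [hV.mem_nhds hy, Iio_mem_nhds hlt] with w hw hlw
        rw [mem_Iio, ← hder w hw, hmono.lt_iff_lt (hXU w hw) hsU] at hlw
        exact hlw.trans hs.2
    suffices h : HasDerivAt G (X y) y from h.differentiableAt
    rw [hasDerivAt_iff_isLittleO, Asymptotics.isLittleO_iff]
    intro ε hε
    filter_upwards [hV.mem_nhds hy, Metric.continuousAt_iff'.1 hcont ε hε] with w hw hXw
    -- `G w - G y` lies between `X y * (w - y)` and `X w * (w - y)`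
    have i₁ := hFY y hy w hw
    have i₂ := hFY w hw y hy
    have hnn : 0 ≤ G w - G y - (w - y) • X y := by
      simp only [hG, smul_eq_mul] at i₁ ⊢
      linarith
    have hle : G w - G y - (w - y) • X y ≤ (X w - X y) * (w - y) := by
      simp only [hG, smul_eq_mul] at i₂ ⊢
      linarith
    rw [Real.norm_of_nonneg hnn]
    refine hle.trans ((le_abs_self _).trans ?_)
    rw [abs_mul, ← Real.dist_eq, Real.norm_eq_abs]
    exact mul_le_mul_of_nonneg_right hXw.le (abs_nonneg _)

end Attainment

/-! ### Breakpoints -/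

lemma Breakpoints.itv_isOpen (B : Breakpoints) (i : ℕ) : IsOpen (B.itv i) :=
  (isOpen_Ioo (a := B.pts i) (b := B.pts (i + 1))).preimage continuous_coe_real_ereal

lemma Breakpoints.itv_ordConnected (B : Breakpoints) (i : ℕ) : (B.itv i).OrdConnected :=
  ⟨fun _ hx _ hy _ hz => ⟨lt_of_lt_of_le hx.1 (EReal.coe_le_coe_iff.2 hz.1),
    lt_of_le_of_lt (EReal.coe_le_coe_iff.2 hz.2) hy.2⟩⟩

lemma Breakpoints.exists_lt_mem_itv (B : Breakpoints) {i : ℕ} (hi : i < B.m) :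
    ∃ x y z : ℝ, x < y ∧ y < z ∧ x ∈ B.itv i ∧ y ∈ B.itv i ∧ z ∈ B.itv i := by
  obtain ⟨y, h1, h2⟩ := EReal.lt_iff_exists_real_btwn.1 (B.mono i (i + 1) (by omega) (by omega))
  obtain ⟨x, h3, h4⟩ := EReal.lt_iff_exists_real_btwn.1 h1
  obtain ⟨z, h5, h6⟩ := EReal.lt_iff_exists_real_btwn.1 h2
  exact ⟨x, y, z, EReal.coe_lt_coe_iff.1 h4, EReal.coe_lt_coe_iff.1 h5,
    ⟨h3, h4.trans h2⟩, ⟨h1, h2⟩, ⟨h1.trans h5, h6⟩⟩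

lemma Breakpoints.cover (B : Breakpoints) (x : ℝ) :
    (∃ i ≤ B.m, (x : EReal) = B.pts i) ∨ ∃ i < B.m, x ∈ B.itv i := by
  by_contra! h
  have key : ∀ k ≤ B.m, B.pts k < x := by
    intro k
    induction k with
    | zero => intro _; rw [B.bot]; exact EReal.bot_lt_coe x
    | succ k ih =>
      intro hk
      by_contra! hle
      exact h.2 k (by omega) ⟨ih (by omega), lt_of_le_of_ne hle (h.1 (k + 1) hk)⟩
  have := key B.m le_rfl
  rw [B.top] at this
  exact not_top_lt this

lemma exists_breakpoints (S : Finset ℝ) :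
    ∃ B : Breakpoints, ∀ i < B.m, ∀ s ∈ S, s ∉ B.itv i := by
  let T : Finset EReal := insert ⊥ (insert ⊤ (S.image fun x : ℝ => (x : EReal)))
  have hcard : 2 ≤ T.card := by
    have h : ({⊥, ⊤} : Finset EReal) ⊆ T := by
      intro t ht
      simp only [Finset.mem_insert, Finset.mem_singleton] at ht
      rcases ht with rfl | rfl <;> simp [T]
    simpa [Finset.card_pair bot_ne_top] using Finset.card_le_card h
  let e := T.orderEmbOfFin rfl
  let p : ℕ → EReal := fun i => if h : i < T.card then e ⟨i, h⟩ else ⊤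
  have hp : ∀ i (h : i < T.card), p i = e ⟨i, h⟩ := fun i h => dif_pos h
  have hrange : ∀ t ∈ T, ∃ j, e j = t := fun t ht => by
    have : t ∈ Set.range e := by rw [Finset.range_orderEmbOfFin]; exact ht
    exact this
  refine ⟨⟨T.card - 1, by omega, p, ?_, ?_, ?_⟩, ?_⟩
  · obtain ⟨j, hj⟩ := hrange ⊥ (by simp [T])
    rw [hp 0 (by omega), ← le_bot_iff, ← hj]
    exact e.monotone (Fin.mk_le_of_le_val (Nat.zero_le _))
  · obtain ⟨j, hj⟩ := hrange ⊤ (by simp [T])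
    rw [hp (T.card - 1) (by omega), ← top_le_iff, ← hj]
    refine e.monotone (Fin.le_def.2 ?_)
    have := j.2
    simp only
    omega
  · intro i j hij hj
    rw [hp i (by omega), hp j (by omega)]
    exact e.strictMono (Fin.mk_lt_mk.2 hij)
  · intro i hi s hs hmem
    simp only at hi
    obtain ⟨j, hj⟩ := hrange (s : EReal) (by simp [T, hs])
    obtain ⟨h1, h2⟩ := hmem
    simp only at h1 h2
    rw [hp i (by omega), ← hj] at h1
    rw [hp (i + 1) (by omega), ← hj] at h2
    have h3 := Fin.lt_def.1 (e.lt_iff_lt.1 h1)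
    have h4 := Fin.lt_def.1 (e.lt_iff_lt.1 h2)
    simp only at h3 h4
    omega

lemma frontier_finite_of_ordConnected {T : Set ℝ} (hT : T.OrdConnected) :
    (frontier T).Finite := by
  have h := hT.isPreconnected.mem_intervals
  generalize sInf T = a at h
  generalize sSup T = b at h
  simp only [mem_insert_iff, mem_singleton_iff] at h
  rcases h with rfl | rfl | rfl | rfl | rfl | rfl | rfl | rfl | rfl | rfl
  · rcases le_or_gt a b with hab | hab
    · rw [frontier_Icc hab]; exact toFinite _
    · simp [Icc_eq_empty_of_lt hab]
  · rcases lt_or_ge a b with hab | hab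
    · rw [frontier_Ico hab]; exact toFinite _
    · simp [Ico_eq_empty_of_le hab]
  · rcases lt_or_ge a b with hab | hab
    · rw [frontier_Ioc hab]; exact toFinite _
    · simp [Ioc_eq_empty_of_le hab]
  · rcases lt_or_ge a b with hab | hab
    · rw [frontier_Ioo hab]; exact toFinite _
    · simp [Ioo_eq_empty_of_le hab]
  all_goals simp

lemma subset_of_disjoint_frontier {T V : Set ℝ} (hV : V.OrdConnected)
    (hdisj : ∀ s ∈ frontier T, s ∉ V) {y : ℝ} (hyV : y ∈ V) (hyT : y ∈ T) : V ⊆ T := by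
  have hsub : V ⊆ interior T ∪ interior Tᶜ := by
    rw [← compl_frontier_eq_union_interior]
    exact fun v hv hf => hdisj v hf hv
  have hy : y ∈ interior T := (hsub hyV).resolve_right fun h => interior_subset h hyT
  refine (hV.isPreconnected.subset_left_of_subset_union isOpen_interior isOpen_interior ?_ hsub
    ⟨y, hyV, hy⟩).trans interior_subset
  exact disjoint_compl_right.mono interior_subset interior_subset

/-- The class `F` is closed under Fenchel conjugation. -/
theorem stmt10 (f : ℝ → EReal) (hf : MemF f) (hproper : ∃ x : ℝ, f x ≠ ⊤) :
    MemF (fenchel f) := by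
  obtain ⟨B, hbot, hlsc, -, -, hpieces⟩ := hf
  have hgbot := fenchel_ne_bot hbot hproper
  have hgconv := fenchel_convex hbot
  have hglsc := fenchel_lsc hbot
  have hitvT : ∀ i, (subdiffImage f (B.itv i)).OrdConnected := fun i =>
    subdiffImage_ordConnected hbot hlsc (B.itv_ordConnected i)
  have hptT : ∀ i, (subdiffImage f {x : ℝ | (x : EReal) = B.pts i}).OrdConnected := fun i =>
    subdiffImage_ordConnected hbot hlsc ⟨fun x hx y hy z hz => by
      have hxy : x = y := EReal.coe_injective (hx.trans hy.symm)
      subst hxy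
      rw [Icc_self, mem_singleton_iff] at hz
      rwa [hz]⟩
  have hdom := effDom_ordConnected hgbot hgconv
  -- the breakpoints of `f*`: all endpoints of the slope intervals and of the domain
  have hfin : (frontier (effDom (fenchel f)) ∪ ⋃ i ∈ Finset.range (B.m + 1),
      (frontier (subdiffImage f (B.itv i)) ∪
        frontier (subdiffImage f {x : ℝ | (x : EReal) = B.pts i}))).Finite :=
    (frontier_finite_of_ordConnected hdom).union (Set.Finite.biUnion (Finset.finite_toSet _)
      fun i _ => (frontier_finite_of_ordConnected (hitvT i)).union
        (frontier_finite_of_ordConnected (hptT i)))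
  obtain ⟨C, hC⟩ := exists_breakpoints hfin.toFinset
  refine ⟨C, hgbot, hglsc, hgconv, continuousOn_effDom hgbot hgconv hglsc, fun k hk => ?_⟩
  have hVo := C.itv_isOpen k
  have hVc := C.itv_ordConnected k
  obtain ⟨y₁, y, y₂, h₁, h₂, hy₁, hy, hy₂⟩ := C.exists_lt_mem_itv hk
  have hdisj := hC k hk
  generalize C.itv k = V at *
  by_cases hVD : ∃ w ∈ V, fenchel f w ≠ ⊤
  swap
  · push Not at hVD
    exact Or.inr (Or.inr hVD)
  obtain ⟨w, hwV, hw⟩ := hVD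
  have hVdom : V ⊆ effDom (fenchel f) :=
    subset_of_disjoint_frontier hVc (fun s hs => hdisj s (by simp [hs])) hwV hw
  obtain ⟨x, hx⟩ := exists_mem_subdiff_of_between hbot hlsc hproper (hVdom hy₁) (hVdom hy₂) h₁ h₂
  rcases B.cover x with ⟨i, hi, hxi⟩ | ⟨i, hi, hxi⟩
  · left
    have hsub : V ⊆ subdiffImage f {x : ℝ | (x : EReal) = B.pts i} := by
      refine subset_of_disjoint_frontier hVc (fun s hs => hdisj s ?_) hy ⟨x, hxi, hx⟩
      rw [Set.Finite.mem_toFinset]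
      exact Or.inr (mem_biUnion (Finset.mem_coe.2 (Finset.mem_range.2 (by omega))) (Or.inr hs))
    refine ⟨x, -(f x).toReal, fun v hv => ?_⟩
    obtain ⟨x', hx', hvx⟩ := hsub hv
    have hxx : x' = x := EReal.coe_injective (hx'.trans hxi.symm)
    subst hxx
    rw [(mem_subdiff_iff_fenchel hbot (coe_toReal_of_ne_top hbot hx.1).symm).1 hvx,
      sub_eq_add_neg]
  · have hsub : V ⊆ subdiffImage f (B.itv i) := by
      refine subset_of_disjoint_frontier hVc (fun s hs => hdisj s ?_) hy ⟨x, hxi, hx⟩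
      rw [Set.Finite.mem_toFinset]
      exact Or.inr (mem_biUnion (Finset.mem_coe.2 (Finset.mem_range.2 (by omega))) (Or.inl hs))
    rcases hpieces i hi with ⟨c, d, hcd⟩ | hstrict | htop
    · -- an affine piece of `f` has a single slope, so it cannot account for an open set
      have hslope : ∀ v ∈ V, v = c := fun v hv => by
        obtain ⟨x', hx', hvx⟩ := hsub hv
        have hd : HasDerivAt (fun z : ℝ => c * z + d) (c * 1) x' :=
          ((hasDerivAt_id x').const_mul c).add_const d
        have := deriv_eq_of_mem_subdiff (B.itv_isOpen i) hcd hx' hd.differentiableAt hvx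
        rw [hd.deriv] at this
        linarith
      linarith [hslope y₁ hy₁, hslope y hy]
    · exact Or.inr (Or.inl
        (fenchel_strictConvexDiffOn hbot (B.itv_isOpen i) hstrict hVo hVc hsub))
    · exact absurd (htop x hxi) hx.1
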